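/- arXiv:1406.6041 — 2 statements merged into one kernel-verified Lean document; each statement's English description precedes it below -/
import Mathlib

section
/- Assume Φ is simply laced, i.e. ⟨α^∨, β⟩ ∈ {−1, 0, 1} for all roots α, β with β ∉ {α, −α}. Then there do not exist a root γ and pairwise distinct simple roots α1, α2, α3 such that α2 is non-orthogonal to both α1 and α3 (i.e. ⟨α2^∨, α1⟩ ≠ 0 and ⟨α2^∨, α3⟩ ≠ 0) and γ−α1, γ−α2 and γ−α3 are all roots. -/
open scoped RealInnerProductSpace

/-- The Cartan pairing `⟨α^∨, x⟩ = 2(α,x)/(α,α)`. -/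
noncomputable def cpair {V : Type*} [NormedAddCommGroup V] [InnerProductSpace ℝ V]
    (α x : V) : ℝ :=
  2 * ⟪α, x⟫ / ⟪α, α⟫

/-- A finite reduced crystallographic root system `Φ` in `V`, together with a fixed base `S`
(the set of simple roots): every root is a nonnegative or nonpositive integer combination of
simple roots. -/
structure BasedRootSystem (V : Type*) [NormedAddCommGroup V] [InnerProductSpace ℝ V] where
  Φ : Set V
  S : Set V
  finite : Φ.Finite
  ne_zero : ∀ α ∈ Φ, α ≠ 0
  neg_mem : ∀ α ∈ Φ, -α ∈ Φ
  reflect_mem : ∀ α ∈ Φ, ∀ β ∈ Φ, β - cpair α β • α ∈ Φ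
  pairing_int : ∀ α ∈ Φ, ∀ β ∈ Φ, ∃ n : ℤ, cpair α β = n
  reduced : ∀ α ∈ Φ, ∀ t : ℝ, t • α ∈ Φ → t = 1 ∨ t = -1
  base_subset : S ⊆ Φ
  base_indep : LinearIndependent ℝ ((↑) : S → V)
  pos_or_neg : ∀ β ∈ Φ,
      (∃ (t : Finset V) (c : V → ℕ), ↑t ⊆ S ∧ β = ∑ s ∈ t, (c s : ℝ) • s) ∨
      (∃ (t : Finset V) (c : V → ℕ), ↑t ⊆ S ∧ -β = ∑ s ∈ t, (c s : ℝ) • s)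

/-- `β` is a positive root: a root which is a nonnegative integer combination of the
simple roots. -/
def BasedRootSystem.IsPositiveRoot {V : Type*} [NormedAddCommGroup V] [InnerProductSpace ℝ V]
    (R : BasedRootSystem V) (β : V) : Prop :=
  β ∈ R.Φ ∧ ∃ (t : Finset V) (c : V → ℕ), ↑t ⊆ R.S ∧ β = ∑ s ∈ t, (c s : ℝ) • s

/-!
Suppose `γ`, `γ - α` and `γ - β` are roots of a simply laced system. The first two force
`⟨α^∨, γ⟩ = 1`, so if `⟨α^∨, β⟩ < 0` then `⟨α^∨, γ - β⟩ > 1`, which for a root is possible only if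
`γ - β = α`. Thus `γ = α + β`, and the root `β` is determined by `γ` and `α`. Applied with
`α = α₂` and `β ∈ {α₁, α₃}` this gives `α₁ = α₃`, since distinct simple roots pair nonpositively.
-/

section Cpair

variable {V : Type*} [NormedAddCommGroup V] [InnerProductSpace ℝ V]

lemma cpair_sub_right (α x y : V) : cpair α (x - y) = cpair α x - cpair α y := by
  simp only [cpair, inner_sub_right, mul_sub, sub_div]

lemma cpair_neg_right (α x : V) : cpair α (-x) = -cpair α x := by
  simp only [cpair, inner_neg_right, mul_neg, neg_div]

lemma cpair_self {α : V} (hα : α ≠ 0) : cpair α α = 2 :=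
  mul_div_cancel_right₀ 2 (inner_self_ne_zero.2 hα)

lemma cpair_self_nonneg (α : V) : 0 ≤ cpair α α :=
  div_nonneg (mul_nonneg zero_le_two real_inner_self_nonneg) real_inner_self_nonneg

end Cpair

/-- A set of vectors is simply laced if `⟨α^∨, β⟩ ∈ {-1, 0, 1}` for all its members `α`, `β` with
`β ≠ ±α`. No root system axiom is included, so the notion applies to arbitrary sets. -/
def IsSimplyLaced {V : Type*} [NormedAddCommGroup V] [InnerProductSpace ℝ V] (Φ : Set V) : Prop :=
  ∀ α ∈ Φ, ∀ β ∈ Φ, β ≠ α → β ≠ -α → cpair α β = -1 ∨ cpair α β = 0 ∨ cpair α β = 1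

namespace IsSimplyLaced

variable {V : Type*} [NormedAddCommGroup V] [InnerProductSpace ℝ V] {Φ : Set V} {α β γ : V}

lemma eq_of_one_lt_cpair (hΦ : IsSimplyLaced Φ) (hα : α ∈ Φ) (hβ : β ∈ Φ)
    (h : 1 < cpair α β) : β = α := by
  by_contra hne
  have hne_neg : β ≠ -α := by
    rintro rfl
    linarith [cpair_neg_right α α, cpair_self_nonneg α]
  rcases hΦ α hα β hβ hne hne_neg with h' | h' | h' <;> linarith

lemma eq_neg_of_cpair_lt_neg_one (hΦ : IsSimplyLaced Φ) (hα : α ∈ Φ) (hβ : β ∈ Φ)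
    (h : cpair α β < -1) : β = -α := by
  by_contra hne_neg
  have hne : β ≠ α := by
    rintro rfl
    linarith [cpair_self_nonneg β]
  rcases hΦ α hα β hβ hne hne_neg with h' | h' | h' <;> linarith

lemma cpair_eq_one_of_sub_mem (hΦ : IsSimplyLaced Φ) (h₀ : 0 ∉ Φ) (hα : α ∈ Φ) (hγ : γ ∈ Φ)
    (hsub : γ - α ∈ Φ) : cpair α γ = 1 := by
  have hα_self : cpair α α = 2 := cpair_self (ne_of_mem_of_not_mem hα h₀)
  have hpos : 0 < cpair α γ := by
    by_contra! hle
    have hlt : cpair α (γ - α) < -1 := by linarith [cpair_sub_right α γ α]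
    have hγ₀ : γ = 0 := by simpa using hΦ.eq_neg_of_cpair_lt_neg_one hα hsub hlt
    exact h₀ (hγ₀ ▸ hγ)
  have hne : γ ≠ α := by
    rintro rfl
    exact h₀ (sub_self γ ▸ hsub)
  have hne_neg : γ ≠ -α := by
    rintro rfl
    linarith [cpair_neg_right α α]
  rcases hΦ α hα γ hγ hne hne_neg with h | h | h <;> linarith

lemma eq_add_of_sub_mem (hΦ : IsSimplyLaced Φ) (h₀ : 0 ∉ Φ) (hα : α ∈ Φ) (hγ : γ ∈ Φ)
    (hsubα : γ - α ∈ Φ) (hsubβ : γ - β ∈ Φ) (hneg : cpair α β < 0) : γ = α + β := by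
  have hlt : 1 < cpair α (γ - β) := by
    linarith [cpair_sub_right α γ β, hΦ.cpair_eq_one_of_sub_mem h₀ hα hγ hsubα]
  exact sub_eq_iff_eq_add.1 (hΦ.eq_of_one_lt_cpair hα hsubβ hlt)

end IsSimplyLaced

namespace BasedRootSystem

variable {V : Type*} [NormedAddCommGroup V] [InnerProductSpace ℝ V] (R : BasedRootSystem V)

lemma zero_notMem : 0 ∉ R.Φ := fun h => R.ne_zero 0 h rfl

/-- The coordinate functional of a simple root, used to read off the coefficients of a root in the
base. Outside the span of the base its values depend on the choice of a left inverse. -/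
noncomputable def coord (s : R.S) : V →ₗ[ℝ] ℝ :=
  Finsupp.lapply s ∘ₗ (Finsupp.linearCombination ℝ ((↑) : R.S → V)).leftInverse

lemma coord_apply_simple (s t : R.S) : R.coord s t = Finsupp.single t 1 s := by
  have hinv : (Finsupp.linearCombination ℝ ((↑) : R.S → V)).leftInverse t = Finsupp.single t 1 := by
    simpa only [Finsupp.linearCombination_single, one_smul] using
      LinearMap.leftInverse_apply_of_inj (LinearMap.ker_eq_bot.2 R.base_indep) (Finsupp.single t 1)
  rw [coord, LinearMap.comp_apply, hinv, Finsupp.lapply_apply]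

lemma coord_self (s : R.S) : R.coord s s = 1 := by
  rw [coord_apply_simple, Finsupp.single_eq_same]

lemma coord_of_ne {s t : R.S} (hst : s ≠ t) : R.coord s t = 0 := by
  rw [coord_apply_simple, Finsupp.single_eq_of_ne hst]

lemma coord_apply_simple_nonneg (s t : R.S) : 0 ≤ R.coord s t := by
  obtain rfl | hst := eq_or_ne s t
  · exact (R.coord_self s).ge.trans' zero_le_one
  · exact (R.coord_of_ne hst).ge

variable {R}

lemma IsPositiveRoot.coord_nonneg {β : V} (hβ : R.IsPositiveRoot β) (s : R.S) :
    0 ≤ R.coord s β := by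
  obtain ⟨-, t, c, ht, rfl⟩ := hβ
  simp only [map_sum, map_smul, smul_eq_mul]
  exact Finset.sum_nonneg fun u hu =>
    mul_nonneg (Nat.cast_nonneg _) (R.coord_apply_simple_nonneg s ⟨u, ht hu⟩)

lemma isPositiveRoot_or_isPositiveRoot_neg {β : V} (hβ : β ∈ R.Φ) :
    R.IsPositiveRoot β ∨ R.IsPositiveRoot (-β) :=
  (R.pos_or_neg β hβ).imp (⟨hβ, ·⟩) (⟨R.neg_mem β hβ, ·⟩)

lemma cpair_simple_nonpos {α β : V} (hα : α ∈ R.S) (hβ : β ∈ R.S) (hne : α ≠ β) :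
    cpair α β ≤ 0 := by
  let s : R.S := ⟨α, hα⟩
  let t : R.S := ⟨β, hβ⟩
  have hst : s ≠ t := Subtype.coe_ne_coe.1 hne
  have hs : R.coord s (β - cpair α β • α) = -cpair α β := by
    rw [map_sub, map_smul, R.coord_of_ne hst, R.coord_self s, smul_eq_mul, mul_one, zero_sub]
  have ht : R.coord t (β - cpair α β • α) = 1 := by
    rw [map_sub, map_smul, R.coord_of_ne hst.symm, R.coord_self t, smul_zero, sub_zero]
  -- The coefficient `1` at `β` makes the reflected root positive, so the one at `α` is nonnegative.
  rcases isPositiveRoot_or_isPositiveRoot_neg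
    (R.reflect_mem α (R.base_subset hα) β (R.base_subset hβ)) with hpos | hneg
  · linarith [hpos.coord_nonneg s]
  · have ht_nonneg := hneg.coord_nonneg t
    rw [map_neg, ht] at ht_nonneg
    linarith

end BasedRootSystem

theorem simply_laced_no_three_simples_general {V : Type*} [NormedAddCommGroup V]
    [InnerProductSpace ℝ V] {Φ : Set V} (hΦ : IsSimplyLaced Φ) (h₀ : 0 ∉ Φ) :
    ¬ ∃ γ ∈ Φ, ∃ α₁, ∃ α₂ ∈ Φ, ∃ α₃, α₁ ≠ α₃ ∧ cpair α₂ α₁ < 0 ∧ cpair α₂ α₃ < 0 ∧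
        γ - α₁ ∈ Φ ∧ γ - α₂ ∈ Φ ∧ γ - α₃ ∈ Φ := by
  rintro ⟨γ, hγ, α₁, α₂, hα₂, α₃, h₁₃, hneg₁, hneg₃, hsub₁, hsub₂, hsub₃⟩
  have hγ₁ : γ = α₂ + α₁ := hΦ.eq_add_of_sub_mem h₀ hα₂ hγ hsub₂ hsub₁ hneg₁
  have hγ₃ : γ = α₂ + α₃ := hΦ.eq_add_of_sub_mem h₀ hα₂ hγ hsub₂ hsub₃ hneg₃
  exact h₁₃ (add_left_cancel (hγ₁.symm.trans hγ₃))

/-- Assume `Φ` is simply laced, i.e. `⟨α^∨, β⟩ ∈ {-1, 0, 1}` for all roots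
`α, β` with `β ∉ {α, -α}`. Then there do not exist a root `γ` and pairwise distinct simple
roots `α₁, α₂, α₃` such that `α₂` is non-orthogonal to both `α₁` and `α₃` and
`γ - α₁`, `γ - α₂`, `γ - α₃` are all roots. -/
theorem simply_laced_no_three_simples {V : Type*} [NormedAddCommGroup V]
    [InnerProductSpace ℝ V] [FiniteDimensional ℝ V] (R : BasedRootSystem V)
    (hsl : ∀ α ∈ R.Φ, ∀ β ∈ R.Φ, β ≠ α → β ≠ -α →
      cpair α β = -1 ∨ cpair α β = 0 ∨ cpair α β = 1) :
    ¬ ∃ γ ∈ R.Φ, ∃ α₁ ∈ R.S, ∃ α₂ ∈ R.S, ∃ α₃ ∈ R.S,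
        α₁ ≠ α₂ ∧ α₁ ≠ α₃ ∧ α₂ ≠ α₃ ∧
        cpair α₂ α₁ ≠ 0 ∧ cpair α₂ α₃ ≠ 0 ∧
        γ - α₁ ∈ R.Φ ∧ γ - α₂ ∈ R.Φ ∧ γ - α₃ ∈ R.Φ := by
  rintro ⟨γ, hγ, α₁, hα₁, α₂, hα₂, α₃, hα₃, h₁₂, h₁₃, h₂₃, hne₁, hne₃, hsub⟩
  have hneg₁ := (BasedRootSystem.cpair_simple_nonpos hα₂ hα₁ h₁₂.symm).lt_of_ne hne₁
  have hneg₃ := (BasedRootSystem.cpair_simple_nonpos hα₂ hα₃ h₂₃).lt_of_ne hne₃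
  exact simply_laced_no_three_simples_general hsl R.zero_notMem
    ⟨γ, hγ, α₁, α₂, R.base_subset hα₂, α₃, h₁₃, hneg₁, hneg₃, hsub⟩
end

section
/- Let α be a simple root such that α ∈ ℤΓ and such that at least two elements λ of F satisfy ⟨α^∨, λ⟩ ≠ 0. If λ ∈ F satisfies λ^#(α) > 0, then for every simple root β with ⟨β^∨, λ⟩ ≠ 0 there exists μ ∈ F with μ ≠ λ and ⟨β^∨, μ⟩ ≠ 0. -/
/-!
Suppose `⟨β^∨, μ⟩ = 0` for all `μ ∈ F` other than `λ`. Then `⟨β^∨, ·⟩ = ⟨β^∨, λ⟩ λ^#` on `ℤΓ`, so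
`⟨β^∨, α⟩ = λ^#(α) ⟨β^∨, λ⟩ > 0`. Distinct simple roots pair nonpositively, hence `β = α`; but
`⟨α^∨, ·⟩` is nonzero on some element of `F` other than `λ`.
-/

open scoped RealInnerProductSpace

/-- `lam` is a dominant weight: `⟨β^∨, lam⟩` is a nonnegative integer for every simple
root `β`. -/
def BasedRootSystem.IsDominant {V : Type*} [NormedAddCommGroup V] [InnerProductSpace ℝ V]
    (R : BasedRootSystem V) (lam : V) : Prop :=
  ∀ β ∈ R.S, ∃ n : ℕ, cpair β lam = n

section LinearAlgebra

lemma map_eq_coord_smul {A M N : Type*} [Semiring A] [AddCommMonoid M] [Module A M]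
    [AddCommMonoid N] [Module A N] {F : Set M} {m : M} (hm : m ∈ F)
    {coord : Submodule.span A F →ₗ[A] A} (hcoord_self : coord ⟨m, Submodule.subset_span hm⟩ = 1)
    (hcoord_ne : ∀ n, ∀ hn : n ∈ F, n ≠ m → coord ⟨n, Submodule.subset_span hn⟩ = 0)
    {g : M →ₗ[A] N} (hg : ∀ n ∈ F, n ≠ m → g n = 0) (x : Submodule.span A F) :
    g x = coord x • g m := by
  suffices h : g ∘ₗ (Submodule.span A F).subtype = coord.smulRight (g m) from
    LinearMap.congr_fun h x
  refine LinearMap.ext_on (Submodule.span_span_coe_preimage (R := A) (s := F)) ?_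
  rintro ⟨n, _⟩ (hn : n ∈ F)
  by_cases hnm : n = m
  · subst hnm
    simp [hcoord_self]
  · simp [hcoord_ne n hn hnm, hg n hn hnm]

lemma exists_linearMap_eq_one_and_eq_zero_of_ne {K V : Type*} [DivisionRing K] [AddCommGroup V]
    [Module K V] {s : Set V} (hs : LinearIndepOn K id s) {a : V} (ha : a ∈ s) :
    ∃ f : V →ₗ[K] K, f a = 1 ∧ ∀ b ∈ s, b ≠ a → f b = 0 := by
  have ha_span : a ∉ Submodule.span K (s \ {a}) := by
    simpa using hs.notMem_span ha
  obtain ⟨f, hf, hfa⟩ := LinearMap.exists_extend_of_notMem 0 ha_span (1 : K)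
  exact ⟨f, hfa, fun b hb hba => LinearMap.congr_fun hf ⟨b, Submodule.subset_span ⟨hb, hba⟩⟩⟩

lemma map_sum_natCast_smul_nonneg {K V : Type*} [Semiring K] [PartialOrder K] [IsOrderedRing K]
    [AddCommMonoid V] [Module K V] {f : V →ₗ[K] K} {S : Set V} (hf : ∀ s ∈ S, 0 ≤ f s)
    {t : Finset V} (ht : ↑t ⊆ S) (c : V → ℕ) : 0 ≤ f (∑ s ∈ t, (c s : K) • s) := by
  simp only [map_sum, map_smul, smul_eq_mul]
  exact Finset.sum_nonneg fun s hs => mul_nonneg (c s).cast_nonneg (hf s (ht hs))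

end LinearAlgebra

section CartanPairing

variable {V : Type*} [NormedAddCommGroup V] [InnerProductSpace ℝ V]

/-- The coroot `β^∨`, encoded as the linear functional `⟨β^∨, ·⟩`; it is `0` for `β = 0`. -/
noncomputable def coroot (β : V) : V →ₗ[ℝ] ℝ :=
  (2 / ⟪β, β⟫) • innerₗ V β

lemma coroot_apply (β x : V) : coroot β x = cpair β x := by
  simp only [coroot, cpair, LinearMap.smul_apply, innerₗ_apply_apply, smul_eq_mul]
  ring

lemma cpair_eq_coord_mul {F : Set V} {lam : V} (hlam : lam ∈ F)
    {coord : Submodule.span ℤ F →ₗ[ℤ] ℤ}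
    (hcoord_self : coord ⟨lam, Submodule.subset_span hlam⟩ = 1)
    (hcoord_ne : ∀ mu, ∀ hmu : mu ∈ F, mu ≠ lam → coord ⟨mu, Submodule.subset_span hmu⟩ = 0)
    {β : V} (hβ : ∀ mu ∈ F, mu ≠ lam → cpair β mu = 0) (x : Submodule.span ℤ F) :
    cpair β x = coord x * cpair β lam := by
  simp only [← coroot_apply] at hβ ⊢
  simpa using map_eq_coord_smul hlam hcoord_self hcoord_ne
    (g := (coroot β).restrictScalars ℤ) hβ x

end CartanPairing

namespace BasedRootSystem

variable {V : Type*} [NormedAddCommGroup V] [InnerProductSpace ℝ V] (R : BasedRootSystem V)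

lemma IsDominant.cpair_nonneg {R : BasedRootSystem V} {lam : V} (h : R.IsDominant lam) {β : V}
    (hβ : β ∈ R.S) : 0 ≤ cpair β lam := by
  obtain ⟨n, hn⟩ := h β hβ
  exact hn ▸ n.cast_nonneg

lemma map_mul_map_nonneg_of_nonneg_on_base {γ : V} (hγ : γ ∈ R.Φ) {f g : V →ₗ[ℝ] ℝ}
    (hf : ∀ s ∈ R.S, 0 ≤ f s) (hg : ∀ s ∈ R.S, 0 ≤ g s) : 0 ≤ f γ * g γ := by
  rcases R.pos_or_neg γ hγ with ⟨t, c, ht, h⟩ | ⟨t, c, ht, h⟩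
  · rw [h]
    exact mul_nonneg (map_sum_natCast_smul_nonneg hf ht c) (map_sum_natCast_smul_nonneg hg ht c)
  · rw [← neg_mul_neg, ← map_neg, ← map_neg, h]
    exact mul_nonneg (map_sum_natCast_smul_nonneg hf ht c) (map_sum_natCast_smul_nonneg hg ht c)

lemma exists_simpleRoot_coord {a : V} (ha : a ∈ R.S) :
    ∃ f : V →ₗ[ℝ] ℝ, f a = 1 ∧ (∀ s ∈ R.S, s ≠ a → f s = 0) ∧ ∀ s ∈ R.S, 0 ≤ f s := by
  obtain ⟨f, hfa, hf⟩ := exists_linearMap_eq_one_and_eq_zero_of_ne R.base_indep ha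
  refine ⟨f, hfa, hf, fun s hs => ?_⟩
  rcases eq_or_ne s a with rfl | hsa
  · exact hfa ▸ zero_le_one
  · exact (hf s hs hsa).ge

-- The reflection `α - ⟨β^∨, α⟩ β` is a root with `α`-coordinate `1`, so its `β`-coordinate
-- `-⟨β^∨, α⟩` cannot be negative.
lemma cpair_nonpos_of_ne {α β : V} (hα : α ∈ R.S) (hβ : β ∈ R.S) (hαβ : α ≠ β) :
    cpair β α ≤ 0 := by
  obtain ⟨f, hfα, hf, hf_nonneg⟩ := R.exists_simpleRoot_coord hα
  obtain ⟨g, hgβ, hg, hg_nonneg⟩ := R.exists_simpleRoot_coord hβ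
  have hroot : α - cpair β α • β ∈ R.Φ :=
    R.reflect_mem β (R.base_subset hβ) α (R.base_subset hα)
  have hmul := R.map_mul_map_nonneg_of_nonneg_on_base hroot hf_nonneg hg_nonneg
  simpa [hfα, hf β hβ hαβ.symm, hgβ, hg α hα hαβ] using hmul

lemma eq_of_cpair_pos {α β : V} (hα : α ∈ R.S) (hβ : β ∈ R.S) (h : 0 < cpair β α) : α = β :=
  by_contra fun hαβ => (R.cpair_nonpos_of_ne hα hβ hαβ).not_gt h

end BasedRootSystem

theorem codim_one_orbit_criterion_general {V : Type*} [NormedAddCommGroup V]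
    [InnerProductSpace ℝ V] (R : BasedRootSystem V) {F : Set V} {lam : V} (hlam : lam ∈ F)
    (hlam_nonneg : ∀ β ∈ R.S, 0 ≤ cpair β lam) {coord : Submodule.span ℤ F →ₗ[ℤ] ℤ}
    (hcoord_self : coord ⟨lam, Submodule.subset_span hlam⟩ = 1)
    (hcoord_ne : ∀ mu, ∀ hmu : mu ∈ F, mu ≠ lam → coord ⟨mu, Submodule.subset_span hmu⟩ = 0)
    {α : V} (hαS : α ∈ R.S) (hα : α ∈ Submodule.span ℤ F)
    (htwo : ∃ mu ∈ F, ∃ nu ∈ F, mu ≠ nu ∧ cpair α mu ≠ 0 ∧ cpair α nu ≠ 0)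
    (hpos : 0 < coord ⟨α, hα⟩) :
    ∀ β ∈ R.S, cpair β lam ≠ 0 → ∃ mu ∈ F, mu ≠ lam ∧ cpair β mu ≠ 0 := by
  intro β hβ hβlam
  by_contra! hvanish
  have hβα : cpair β α = coord ⟨α, hα⟩ * cpair β lam :=
    cpair_eq_coord_mul hlam hcoord_self hcoord_ne hvanish ⟨α, hα⟩
  have hβα_pos : 0 < cpair β α :=
    hβα ▸ mul_pos (Int.cast_pos.mpr hpos) ((hlam_nonneg β hβ).lt_of_ne' hβlam)
  obtain rfl : α = β := R.eq_of_cpair_pos hαS hβ hβα_pos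
  obtain ⟨mu, hmu, nu, hnu, hne, hαmu, hαnu⟩ := htwo
  have hmu_eq : mu = lam := not_imp_comm.mp (hvanish mu hmu) hαmu
  have hnu_eq : nu = lam := not_imp_comm.mp (hvanish nu hnu) hαnu
  exact hne (hmu_eq.trans hnu_eq.symm)

/-- Let `F` be a finite linearly independent set of dominant weights and
`ℤΓ` the subgroup it generates, with dual basis `λ^#` (`lsharp`).  Let `α` be a simple root
with `α ∈ ℤΓ` such that at least two elements `λ` of `F` satisfy `⟨α^∨, λ⟩ ≠ 0`.
If `λ ∈ F` satisfies `λ^#(α) > 0`, then for every simple root `β` with `⟨β^∨, λ⟩ ≠ 0` there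
exists `μ ∈ F` with `μ ≠ λ` and `⟨β^∨, μ⟩ ≠ 0`. -/
theorem codim_one_orbit_criterion {V : Type*} [NormedAddCommGroup V] [InnerProductSpace ℝ V]
    [FiniteDimensional ℝ V] (R : BasedRootSystem V) (F : Finset V)
    (hFdom : ∀ lam ∈ F, R.IsDominant lam)
    (hFindep : LinearIndependent ℝ (Subtype.val : ↥(F : Set V) → V))
    (lsharp : V → (Submodule.span ℤ (F : Set V) →ₗ[ℤ] ℤ))
    (hlsharp : ∀ lam ∈ F, ∀ mu, ∀ hmu : mu ∈ F,
      (mu = lam → lsharp lam ⟨mu, Submodule.subset_span (Finset.mem_coe.mpr hmu)⟩ = 1) ∧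
      (mu ≠ lam → lsharp lam ⟨mu, Submodule.subset_span (Finset.mem_coe.mpr hmu)⟩ = 0))
    (α : V) (hαS : α ∈ R.S) (hα : α ∈ Submodule.span ℤ (F : Set V))
    (htwo : ∃ lam ∈ F, ∃ mu ∈ F, lam ≠ mu ∧ cpair α lam ≠ 0 ∧ cpair α mu ≠ 0)
    (lam : V) (hlam : lam ∈ F) (hpos : 0 < lsharp lam ⟨α, hα⟩) :
    ∀ β ∈ R.S, cpair β lam ≠ 0 → ∃ mu ∈ F, mu ≠ lam ∧ cpair β mu ≠ 0 :=
  codim_one_orbit_criterion_general R hlam (fun _ hβ => (hFdom lam hlam).cpair_nonneg hβ)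
    ((hlsharp lam hlam lam hlam).1 rfl) (fun mu hmu => (hlsharp lam hlam mu hmu).2) hαS hα htwo hpos
end
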